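/- A regular semi-simple element y ∈ s_{n+1} matches to signature (n,0) (i.e. Inv(y) = Inv(x) for some regular semi-simple x in the Lie algebra u(n+1) of the compact unitary group) if and only if y is GL_n(ℝ)-conjugate to an element of the form i·M where M is real symmetric with diagonal (λ₁,...,λₙ,d), off-diagonal entries only in the last row and column given by μ₁,...,μₙ. -/

import Mathlib

open Matrix MeasureTheory

noncomputable section

/-- The space `s_{n+1} = {y ∈ M_{n+1}(ℂ) | y + ȳ = 0}` (entrywise conjugation). -/
def sSet (n : ℕ) : Set (Matrix (Fin (n+1)) (Fin (n+1)) ℂ) :=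
  {y | y + y.map (starRingEnd ℂ) = 0}

/-- The embedding `g ↦ diag(g, 1)` of `n×n` matrices into `(n+1)×(n+1)` matrices. -/
def dgC {n : ℕ} (g : Matrix (Fin n) (Fin n) ℂ) : Matrix (Fin (n+1)) (Fin (n+1)) ℂ :=
  Matrix.reindex finSumFinEquiv finSumFinEquiv
    (Matrix.fromBlocks g 0 0 (1 : Matrix (Fin 1) (Fin 1) ℂ))

/-- The real version of `diag(H, 1)`. -/
def dgR {n : ℕ} (H : Matrix (Fin n) (Fin n) ℝ) : Matrix (Fin (n+1)) (Fin (n+1)) ℝ :=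
  Matrix.reindex finSumFinEquiv finSumFinEquiv
    (Matrix.fromBlocks H 0 0 (1 : Matrix (Fin 1) (Fin 1) ℝ))

/-- The action of `GL_n(ℝ)` on `(n+1)×(n+1)` complex matrices:
`g · y = diag(g,1) y diag(g,1)⁻¹`. -/
def mact {n : ℕ} (g : GL (Fin n) ℝ) (y : Matrix (Fin (n+1)) (Fin (n+1)) ℂ) :
    Matrix (Fin (n+1)) (Fin (n+1)) ℂ :=
  dgC (((g : Matrix (Fin n) (Fin n) ℝ)).map (fun r : ℝ => (r : ℂ))) * y *
    dgC ((((g⁻¹ : GL (Fin n) ℝ) : Matrix (Fin n) (Fin n) ℝ)).map (fun r : ℝ => (r : ℂ)))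

/-- The upper-left `n×n` block `y₀` of `y`. -/
def blk0 {n : ℕ} (y : Matrix (Fin (n+1)) (Fin (n+1)) ℂ) : Matrix (Fin n) (Fin n) ℂ :=
  Matrix.of fun i j => y i.castSucc j.castSucc

/-- The last-column block `v` of `y` (a column vector). -/
def blkv {n : ℕ} (y : Matrix (Fin (n+1)) (Fin (n+1)) ℂ) : Fin n → ℂ :=
  fun i => y i.castSucc (Fin.last n)

/-- The last-row block `w` of `y` (a row vector). -/
def blkw {n : ℕ} (y : Matrix (Fin (n+1)) (Fin (n+1)) ℂ) : Fin n → ℂ :=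
  fun j => y (Fin.last n) j.castSucc

/-- The lower-right entry `d` of `y`. -/
def blkd {n : ℕ} (y : Matrix (Fin (n+1)) (Fin (n+1)) ℂ) : ℂ :=
  y (Fin.last n) (Fin.last n)

/-- The spanning characterization of regular semi-simplicity:
`ℂ[y₀]·v = ℂⁿ` and `w·ℂ[y₀] = ℂ_n`. -/
def RSspan {n : ℕ} (y : Matrix (Fin (n+1)) (Fin (n+1)) ℂ) : Prop :=
  Submodule.span ℂ {u : Fin n → ℂ | ∃ k : ℕ, u = (blk0 y ^ k) *ᵥ blkv y} = ⊤ ∧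
  Submodule.span ℂ {u : Fin n → ℂ | ∃ k : ℕ, u = blkw y ᵥ* (blk0 y ^ k)} = ⊤

/-- The Jacquet–Rallis invariant `Inv(y) = (char(y₀;T), w v, w y₀ v, …, w y₀^{n-1} v, d)`. -/
def InvS {n : ℕ} (y : Matrix (Fin (n+1)) (Fin (n+1)) ℂ) :
    Polynomial ℂ × (Fin n → ℂ) × ℂ :=
  ((blk0 y).charpoly, fun k => blkw y ⬝ᵥ ((blk0 y ^ (k : ℕ)) *ᵥ blkv y), blkd y)

/-- The Lie algebra `u(n+1)` of the compact unitary group: `x* = -x`. -/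
def uSet (n : ℕ) : Set (Matrix (Fin (n+1)) (Fin (n+1)) ℂ) :=
  {x | xᴴ = -x}

/-- Regular semi-simplicity on the unitary side: `ℂ[x₀]·u = ℂⁿ`. -/
def RSspanU {n : ℕ} (x : Matrix (Fin (n+1)) (Fin (n+1)) ℂ) : Prop :=
  Submodule.span ℂ {u : Fin n → ℂ | ∃ k : ℕ, u = (blk0 x ^ k) *ᵥ blkv x} = ⊤

/-- The invariant on the unitary side,
`Inv(x) = (char(x₀;T), -(u,u), …, -(u, x₀^{n-1} u), d)`, with the standard
positive definite hermitian form `(a,b) = star a ⬝ᵥ b`. -/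
def InvU {n : ℕ} (x : Matrix (Fin (n+1)) (Fin (n+1)) ℂ) :
    Polynomial ℂ × (Fin n → ℂ) × ℂ :=
  ((blk0 x).charpoly,
   fun k => -(star (blkv x) ⬝ᵥ ((blk0 x ^ (k : ℕ)) *ᵥ blkv x)),
   blkd x)

/-- `y` matches to signature `(n,0)`: there is a matching regular semi-simple element
of `u(n+1)` (the positive definite case). -/
def MatchesN0 {n : ℕ} (y : Matrix (Fin (n+1)) (Fin (n+1)) ℂ) : Prop :=
  ∃ x ∈ uSet n, RSspanU x ∧ InvS y = InvU x

/-- The real "arrow" matrix with diagonal `(λ₁,…,λₙ,d)` and last row/column `μ₁,…,μₙ`. -/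
def arrow {n : ℕ} (lam mu : Fin n → ℝ) (d : ℝ) : Matrix (Fin (n+1)) (Fin (n+1)) ℝ :=
  Matrix.reindex finSumFinEquiv finSumFinEquiv
    (Matrix.fromBlocks (Matrix.diagonal lam)
      (Matrix.of fun i (_ : Fin 1) => mu i)
      (Matrix.of fun (_ : Fin 1) j => mu j)
      (Matrix.of fun _ _ => d))

/-- `i·A` for a real matrix `A`, viewed inside `M_{n+1}(ℂ)`. -/
def iM {n : ℕ} (A : Matrix (Fin (n+1)) (Fin (n+1)) ℝ) : Matrix (Fin (n+1)) (Fin (n+1)) ℂ :=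
  Complex.I • (A.map fun r : ℝ => (r : ℂ))

/-- The element `i·M` of `s_{n+1}` attached to arrow data. -/
def iArrow {n : ℕ} (lam mu : Fin n → ℝ) (d : ℝ) : Matrix (Fin (n+1)) (Fin (n+1)) ℂ :=
  iM (arrow lam mu d)

/-- A real-valued polynomial function on a real vector space: an element of the
subalgebra of functions generated by the linear functionals. -/
def IsPolyFun {V : Type*} [AddCommGroup V] [Module ℝ V] (f : V → ℝ) : Prop :=
  f ∈ Algebra.adjoin ℝ (Set.range fun l : V →ₗ[ℝ] ℝ => ⇑l)

/-- Zariski-closed subsets of a real vector space: common zero loci of families of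
polynomial functions. -/
def IsRZClosed {V : Type*} [AddCommGroup V] [Module ℝ V] (s : Set V) : Prop :=
  ∃ T : Set (V → ℝ), (∀ f ∈ T, IsPolyFun f) ∧ s = {x | ∀ f ∈ T, f x = 0}

/-- Regular semi-simplicity as defined in the paper: trivial `GL_n(ℝ)`-stabilizer
and Zariski-closed orbit. -/
def RSdef {n : ℕ} (y : Matrix (Fin (n+1)) (Fin (n+1)) ℂ) : Prop :=
  (∀ g : GL (Fin n) ℝ, mact g y = y → g = 1) ∧
  IsRZClosed {z | ∃ g : GL (Fin n) ℝ, z = mact g y}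

/-- The set `𝔖` of regular semi-simple elements of `s_{n+1}` matching signature `(n,0)`. -/
def frakS (n : ℕ) : Set (Matrix (Fin (n+1)) (Fin (n+1)) ℂ) :=
  {y | y ∈ sSet n ∧ RSspan y ∧ MatchesN0 y}

/-!
Over any field, a triple `(A, b, c)` whose vector `b` and covector `c` are both cyclic is determined
up to conjugation by the characteristic polynomial of `A` and the moments `c Aᵏ b`, `k < n`:
by Cayley–Hamilton these fix all moments, hence the products of the observability matrix
`(c Aⁱ)ᵢ` with the Krylov matrix `(Aʲ b)ⱼ`, and the conjugating matrix is read off from these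
invertible factors. It is unique, so between two triples satisfying `ȳ = -y` it is fixed by complex
conjugation, i.e. real. Thus `Inv` separates the regular semi-simple `GL_n(ℝ)`-orbits in `s_{n+1}`.

On the unitary side, diagonalise `x₀ = U (iΛ) U*` and put `μⱼ = |(U* u)ⱼ|`. Both `x` and the arrow
matrix `i·M` with data `(Λ, μ, d)` then have the moments `-∑ μⱼ² (iλⱼ)ᵏ`, and `i·M` lies
in `s_{n+1}` and in `u(n+1)` at once.
-/

section Semiconj

variable {ι R : Type*} [Fintype ι] [DecidableEq ι] [CommRing R]
  {A A' : Matrix ι ι R} {b c b' c' : ι → R}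

theorem charpoly_eq_of_semiconjBy {g : GL ι R} (h : SemiconjBy (g : Matrix ι ι R) A A') :
    A.charpoly = A'.charpoly := by
  rw [← charpoly_units_conj g A, h.eq, Matrix.mul_inv_cancel_right_of_invertible]

theorem mulVec_pow_mulVec_of_semiconjBy {g : Matrix ι ι R} (h : SemiconjBy g A A')
    (hb : g *ᵥ b = b') (k : ℕ) : g *ᵥ (A ^ k *ᵥ b) = A' ^ k *ᵥ b' := by
  rw [mulVec_mulVec, (h.pow_right k).eq, ← mulVec_mulVec, hb]

theorem dotProduct_pow_mulVec_of_semiconjBy {g : Matrix ι ι R} (h : SemiconjBy g A A')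
    (hb : g *ᵥ b = b') (hc : c' ᵥ* g = c) (k : ℕ) :
    c ⬝ᵥ (A ^ k *ᵥ b) = c' ⬝ᵥ (A' ^ k *ᵥ b') := by
  rw [← hc, ← dotProduct_mulVec, mulVec_pow_mulVec_of_semiconjBy h hb]

/-- The vector `b` is cyclic for `A` when its iterates `Aᵏ b` span the whole space; cyclicity of a
row vector `c` is expressed as cyclicity of `c` for `Aᵀ`. -/
def IsCyclicVector (A : Matrix ι ι R) (b : ι → R) : Prop :=
  Submodule.span R {u : ι → R | ∃ k : ℕ, u = A ^ k *ᵥ b} = ⊤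

theorem IsCyclicVector.of_semiconjBy {g : GL ι R} (hA : IsCyclicVector A b)
    (h : SemiconjBy (g : Matrix ι ι R) A A') (hb : (g : Matrix ι ι R) *ᵥ b = b') :
    IsCyclicVector A' b' := by
  have hg : Function.Surjective (g : Matrix ι ι R).mulVecLin := fun u =>
    ⟨(↑g⁻¹ : Matrix ι ι R) *ᵥ u, by
      rw [mulVecLin_apply, mulVec_mulVec, Units.mul_inv, one_mulVec]⟩
  rw [IsCyclicVector, eq_top_iff, ← LinearMap.range_eq_top.2 hg, ← Submodule.map_top, ← hA,
    Submodule.map_span]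
  refine Submodule.span_mono ?_
  rintro _ ⟨_, ⟨k, rfl⟩, rfl⟩
  exact ⟨k, mulVec_pow_mulVec_of_semiconjBy h hb k⟩

theorem IsCyclicVector.semiconjBy_unique {g h : Matrix ι ι R} (hA : IsCyclicVector A b)
    (hg : SemiconjBy g A A') (hh : SemiconjBy h A A') (hb : g *ᵥ b = h *ᵥ b) : g = h := by
  refine mulVec_injective (funext fun u => ?_)
  have hlin : g.mulVecLin = h.mulVecLin := by
    refine LinearMap.ext_on hA ?_
    rintro _ ⟨k, rfl⟩
    rw [mulVecLin_apply, mulVecLin_apply, mulVec_pow_mulVec_of_semiconjBy hg hb,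
      mulVec_pow_mulVec_of_semiconjBy hh rfl]
  exact LinearMap.congr_fun hlin u

theorem IsCyclicVector.map_eq_self_of_semiconjBy {σ : R →+* R} {g : Matrix ι ι R}
    (hA : IsCyclicVector A b) (hg : SemiconjBy g A A') (hgb : g *ᵥ b = b')
    (hσA : A.map σ = -A) (hσA' : A'.map σ = -A') (hσb : σ ∘ b = -b) (hσb' : σ ∘ b' = -b') :
    g.map σ = g := by
  refine hA.semiconjBy_unique ?_ hg ?_
  · have h := congrArg (fun M => M.map σ) hg.eq
    simpa only [SemiconjBy, Matrix.map_mul, hσA, hσA', mul_neg, neg_mul, neg_inj] using h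
  · have h : σ ∘ (g *ᵥ b) = g.map σ *ᵥ (σ ∘ b) := funext (σ.map_mulVec g b)
    rw [hgb, hσb, hσb', mulVec_neg, neg_inj] at h
    rw [← h, hgb]

end Semiconj

theorem exists_units_mul_eq_of_mul_eq_mul {M : Type*} [Monoid M] [IsDedekindFiniteMonoid M]
    {p q p' q' : M} (hp : IsUnit p) (hq : IsUnit q) (h : q * p = q' * p') :
    ∃ g : Mˣ, g * p = p' ∧ q' * g = q := by
  have hp' : IsUnit p' := (IsUnit.mul_iff.1 (h ▸ hq.mul hp)).2
  have hgp : ↑(hp'.unit * hp.unit⁻¹) * p = p' := by simp [mul_assoc]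
  exact ⟨hp'.unit * hp.unit⁻¹, hgp, hp.mul_right_cancel (by rw [mul_assoc, hgp, h])⟩

section Krylov

variable {n : ℕ} {R : Type*} [CommRing R]

theorem pow_eq_sum_coeff_modByMonic_smul_pow [Nontrivial R] (A : Matrix (Fin n) (Fin n) R)
    (k : ℕ) :
    A ^ k = ∑ j : Fin n,
      (Polynomial.X ^ k %ₘ A.charpoly : Polynomial R).coeff j • A ^ (j : ℕ) := by
  have hdeg : (Polynomial.X ^ k %ₘ A.charpoly : Polynomial R).degree < n := by
    simpa only [charpoly_degree_eq_dim, Fintype.card_fin] using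
      Polynomial.degree_modByMonic_lt (Polynomial.X ^ k) A.charpoly_monic
  rw [Polynomial.sum_fin (fun i a => a • A ^ i) (fun i => zero_smul R _) hdeg,
    pow_eq_aeval_mod_charpoly, Polynomial.aeval_eq_sum_range, Polynomial.sum_over_range]
  exact fun i => zero_smul R _

theorem dotProduct_pow_mulVec_eq_of_charpoly_eq [Nontrivial R] {A A' : Matrix (Fin n) (Fin n) R}
    {b c b' c' : Fin n → R} (hchar : A.charpoly = A'.charpoly)
    (hmom : ∀ k : Fin n, c ⬝ᵥ (A ^ (k : ℕ) *ᵥ b) = c' ⬝ᵥ (A' ^ (k : ℕ) *ᵥ b')) (k : ℕ) :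
    c ⬝ᵥ (A ^ k *ᵥ b) = c' ⬝ᵥ (A' ^ k *ᵥ b') := by
  rw [pow_eq_sum_coeff_modByMonic_smul_pow A, pow_eq_sum_coeff_modByMonic_smul_pow A', hchar]
  simp only [sum_mulVec, dotProduct_sum, smul_mulVec, dotProduct_smul, hmom]

/-- The Krylov matrix, with columns `b, A b, …, Aⁿ⁻¹ b`; it is invertible when `b` is cyclic over a
field. -/
def krylov (A : Matrix (Fin n) (Fin n) R) (b : Fin n → R) : Matrix (Fin n) (Fin n) R :=
  Matrix.of fun i j => (A ^ (j : ℕ) *ᵥ b) i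

/-- The observability matrix, with rows `c, c A, …, c Aⁿ⁻¹`: the counterpart of `krylov` for row
vectors. -/
def observability (A : Matrix (Fin n) (Fin n) R) (c : Fin n → R) : Matrix (Fin n) (Fin n) R :=
  Matrix.of fun i j => (c ᵥ* A ^ (i : ℕ)) j

theorem transpose_krylov_transpose (A : Matrix (Fin n) (Fin n) R) (c : Fin n → R) :
    (krylov Aᵀ c)ᵀ = observability A c := by
  ext i j
  simp only [krylov, observability, transpose_apply, of_apply, ← transpose_pow, mulVec_transpose]

theorem observability_mulVec_apply (A : Matrix (Fin n) (Fin n) R) (c b : Fin n → R) (i : Fin n) :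
    (observability A c *ᵥ b) i = c ⬝ᵥ (A ^ (i : ℕ) *ᵥ b) :=
  (dotProduct_mulVec c _ b).symm

theorem vecMul_krylov_apply (A : Matrix (Fin n) (Fin n) R) (c b : Fin n → R) (j : Fin n) :
    (c ᵥ* krylov A b) j = c ⬝ᵥ (A ^ (j : ℕ) *ᵥ b) :=
  rfl

theorem observability_mul_pow_mul_krylov_apply (A : Matrix (Fin n) (Fin n) R) (c b : Fin n → R)
    (m : ℕ) (i j : Fin n) :
    (observability A c * A ^ m * krylov A b) i j = c ⬝ᵥ (A ^ (i + m + j : ℕ) *ᵥ b) := by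
  rw [pow_add, pow_add, ← mulVec_mulVec, ← mulVec_mulVec, ← observability_mulVec_apply,
    mulVec_mulVec]
  rfl

variable {K : Type*} [Field K] {A A' : Matrix (Fin n) (Fin n) K} {b c b' c' : Fin n → K}

theorem IsCyclicVector.isUnit_krylov (hb : IsCyclicVector A b) : IsUnit (krylov A b) := by
  rw [← linearIndependent_cols_iff_isUnit]
  refine linearIndependent_of_top_le_span_of_card_eq_finrank ?_ (by simp)
  rw [← hb, Submodule.span_le]
  rintro _ ⟨k, rfl⟩
  rw [pow_eq_sum_coeff_modByMonic_smul_pow A k, sum_mulVec]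
  refine Submodule.sum_mem _ fun j _ => ?_
  rw [smul_mulVec]
  exact Submodule.smul_mem _ _ (Submodule.subset_span ⟨j, rfl⟩)

theorem IsCyclicVector.isUnit_observability (hc : IsCyclicVector Aᵀ c) :
    IsUnit (observability A c) := by
  rw [← transpose_krylov_transpose]
  exact (isUnit_transpose _).2 hc.isUnit_krylov

theorem exists_semiconjBy_of_charpoly_eq (hchar : A.charpoly = A'.charpoly)
    (hmom : ∀ k : Fin n, c ⬝ᵥ (A ^ (k : ℕ) *ᵥ b) = c' ⬝ᵥ (A' ^ (k : ℕ) *ᵥ b'))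
    (hb : IsCyclicVector A b) (hc : IsCyclicVector Aᵀ c) :
    ∃ g : GL (Fin n) K, SemiconjBy (g : Matrix (Fin n) (Fin n) K) A A' ∧
      (g : Matrix (Fin n) (Fin n) K) *ᵥ b = b' ∧ c' ᵥ* (g : Matrix (Fin n) (Fin n) K) = c := by
  have hmom' := dotProduct_pow_mulVec_eq_of_charpoly_eq hchar hmom
  have hprod (m : ℕ) :
      observability A c * A ^ m * krylov A b = observability A' c' * A' ^ m * krylov A' b' := by
    ext i j
    simp only [observability_mul_pow_mul_krylov_apply, hmom']
  have hob : observability A c *ᵥ b = observability A' c' *ᵥ b' := by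
    ext i
    simp only [observability_mulVec_apply, hmom']
  have hck : c ᵥ* krylov A b = c' ᵥ* krylov A' b' := by
    ext j
    simp only [vecMul_krylov_apply, hmom']
  have hok : observability A c * krylov A b = observability A' c' * krylov A' b' := by
    simpa only [pow_zero, mul_one] using hprod 0
  have hk := hb.isUnit_krylov
  have ho := hc.isUnit_observability
  have ho' : IsUnit (observability A' c') := isUnit_of_mul_isUnit_left (hok ▸ ho.mul hk)
  obtain ⟨g, hgk, hog⟩ := exists_units_mul_eq_of_mul_eq_mul hk ho hok
  refine ⟨g, hk.mul_right_cancel (ho'.mul_left_cancel ?_), mulVec_injective_of_isUnit ho' ?_,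
    vecMul_injective_of_isUnit hk ?_⟩
  · calc observability A' c' * (g * A * krylov A b)
        = observability A c * A * krylov A b := by simp only [← hog, mul_assoc]
      _ = observability A' c' * A' * krylov A' b' := by simpa only [pow_one] using hprod 1
      _ = observability A' c' * (A' * g * krylov A b) := by simp only [← hgk, mul_assoc]
  · rw [mulVec_mulVec, hog, hob]
  · simp only [vecMul_vecMul, hgk, hck]

end Krylov

section Unitary

variable {ι : Type*} [Fintype ι] [DecidableEq ι]

theorem exists_eq_conjStarAlgAut_diagonal_I_mul {X : Matrix ι ι ℂ} (hX : Xᴴ = -X) :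
    ∃ (U : unitaryGroup ι ℂ) (lam : ι → ℝ),
      X = Unitary.conjStarAlgAut ℂ _ U (diagonal fun i => Complex.I * lam i) := by
  have hH : (-Complex.I • X).IsHermitian := by
    rw [IsHermitian, conjTranspose_smul, hX]
    simp
  refine ⟨hH.eigenvectorUnitary, hH.eigenvalues, ?_⟩
  calc X = Complex.I • (-Complex.I • X) := by simp [smul_smul]
    _ = _ := by
      conv_lhs => rw [hH.spectral_theorem, ← map_smul, ← diagonal_smul]
      rfl

theorem charpoly_conjStarAlgAut {R : Type*} [CommRing R] [StarRing R] (U : unitaryGroup ι R)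
    (A : Matrix ι ι R) : (Unitary.conjStarAlgAut R _ U A).charpoly = A.charpoly := by
  rw [Unitary.conjStarAlgAut_apply, charpoly_mul_comm, ← mul_assoc, Unitary.coe_star_mul_self,
    one_mul]

theorem star_dotProduct_conjStarAlgAut_mulVec {R : Type*} [CommRing R] [StarRing R]
    (U : unitaryGroup ι R) (A : Matrix ι ι R) (u : ι → R) :
    star u ⬝ᵥ (Unitary.conjStarAlgAut R _ U A *ᵥ u) =
      star (star (U : Matrix ι ι R) *ᵥ u) ⬝ᵥ (A *ᵥ (star (U : Matrix ι ι R) *ᵥ u)) := by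
  rw [Unitary.conjStarAlgAut_apply, star_mulVec, star_eq_conjTranspose, conjTranspose_conjTranspose,
    ← dotProduct_mulVec, mulVec_mulVec, mulVec_mulVec, mul_assoc]

theorem I_mul_norm_dotProduct_diagonal_mulVec (u e : ι → ℂ) :
    (fun i => Complex.I * ‖u i‖) ⬝ᵥ (diagonal e *ᵥ fun i => Complex.I * ‖u i‖) =
      -(star u ⬝ᵥ (diagonal e *ᵥ u)) := by
  simp only [dotProduct, mulVec_diagonal, ← Finset.sum_neg_distrib, Pi.star_apply]
  refine Finset.sum_congr rfl fun i _ => ?_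
  have hnorm : star (u i) * u i = (‖u i‖ : ℂ) ^ 2 := Complex.conj_mul' (u i)
  linear_combination (e i * (‖u i‖ : ℂ) ^ 2) * Complex.I_sq + e i * hnorm

theorem exists_diagonal_charpoly_eq_and_dotProduct_eq {X : Matrix ι ι ℂ} (hX : Xᴴ = -X)
    (u : ι → ℂ) :
    ∃ lam mu : ι → ℝ, (diagonal fun i => Complex.I * (lam i : ℂ)).charpoly = X.charpoly ∧
      ∀ k : ℕ, (fun i => Complex.I * (mu i : ℂ)) ⬝ᵥ
        ((diagonal fun i => Complex.I * (lam i : ℂ)) ^ k *ᵥ fun i => Complex.I * (mu i : ℂ)) =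
          -(star u ⬝ᵥ (X ^ k *ᵥ u)) := by
  obtain ⟨U, lam, rfl⟩ := exists_eq_conjStarAlgAut_diagonal_I_mul hX
  refine ⟨lam, fun i => ‖(star (U : Matrix ι ι ℂ) *ᵥ u) i‖, (charpoly_conjStarAlgAut U _).symm,
    fun k => ?_⟩
  rw [← map_pow, star_dotProduct_conjStarAlgAut_mulVec, diagonal_pow,
    I_mul_norm_dotProduct_diagonal_mulVec]

end Unitary

theorem exists_generalLinearGroup_map_ofReal_eq {ι : Type*} [Fintype ι] [DecidableEq ι]
    {g : GL ι ℂ} (hg : (g : Matrix ι ι ℂ).map (starRingEnd ℂ) = g) :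
    ∃ G : GL ι ℝ, GeneralLinearGroup.map Complex.ofRealHom G = g := by
  have hre : ((g : Matrix ι ι ℂ).map Complex.re).map Complex.ofRealHom = g := by
    ext i j
    exact Complex.conj_eq_iff_re.1 (congrFun (congrFun hg i) j)
  have hdet : ((g : Matrix ι ι ℂ).map Complex.re).det ≠ 0 := by
    refine fun h => (isUnit_iff_isUnit_det _).1 g.isUnit |>.ne_zero ?_
    rw [← hre, ← RingHom.mapMatrix_apply, ← RingHom.map_det, h, map_zero]
  exact ⟨GeneralLinearGroup.mkOfDetNeZero _ hdet, Units.ext hre⟩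

section Blocks

variable {n : ℕ} {y z : Matrix (Fin (n + 1)) (Fin (n + 1)) ℂ}

theorem eq_of_blk_eq (h0 : blk0 y = blk0 z) (hv : blkv y = blkv z) (hw : blkw y = blkw z)
    (hd : blkd y = blkd z) : y = z := by
  ext i j
  induction i using Fin.lastCases with
  | last =>
    induction j using Fin.lastCases with
    | last => exact hd
    | cast j => exact congrFun hw j
  | cast i =>
    induction j using Fin.lastCases with
    | last => exact congrFun hv i
    | cast j => exact congrFun (congrFun h0 i) j

section Product

variable (g h : Matrix (Fin n) (Fin n) ℂ) (y : Matrix (Fin (n + 1)) (Fin (n + 1)) ℂ)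

theorem blk0_dgC_mul_mul_dgC : blk0 (dgC g * y * dgC h) = g * blk0 y * h := by
  ext i j
  simp [blk0, dgC, mul_apply, Fin.sum_univ_castSucc, finSumFinEquiv_symm_last]

theorem blkv_dgC_mul_mul_dgC : blkv (dgC g * y * dgC h) = g *ᵥ blkv y := by
  ext i
  simp [blkv, dgC, mul_apply, Fin.sum_univ_castSucc, finSumFinEquiv_symm_last, mulVec, dotProduct]

theorem blkw_dgC_mul_mul_dgC : blkw (dgC g * y * dgC h) = blkw y ᵥ* h := by
  ext j
  simp [blkw, dgC, mul_apply, Fin.sum_univ_castSucc, finSumFinEquiv_symm_last, vecMul, dotProduct]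

theorem blkd_dgC_mul_mul_dgC : blkd (dgC g * y * dgC h) = blkd y := by
  simp [blkd, dgC, mul_apply, Fin.sum_univ_castSucc, finSumFinEquiv_symm_last]

end Product

theorem mact_eq_iff (g : GL (Fin n) ℝ) :
    mact g y = z ↔
      SemiconjBy (g.map Complex.ofRealHom : Matrix (Fin n) (Fin n) ℂ) (blk0 y) (blk0 z) ∧
      (g.map Complex.ofRealHom : Matrix (Fin n) (Fin n) ℂ) *ᵥ blkv y = blkv z ∧
      blkw z ᵥ* (g.map Complex.ofRealHom : Matrix (Fin n) (Fin n) ℂ) = blkw y ∧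
      blkd y = blkd z := by
  set γ : GL (Fin n) ℂ := g.map Complex.ofRealHom
  have hmact : mact g y = dgC (γ : Matrix (Fin n) (Fin n) ℂ) * y *
      dgC (↑γ⁻¹ : Matrix (Fin n) (Fin n) ℂ) := rfl
  constructor
  · rintro rfl
    rw [hmact, blk0_dgC_mul_mul_dgC, blkv_dgC_mul_mul_dgC, blkw_dgC_mul_mul_dgC,
      blkd_dgC_mul_mul_dgC, vecMul_vecMul, Units.inv_mul, vecMul_one, SemiconjBy,
      Units.inv_mul_cancel_right]
    exact ⟨rfl, rfl, rfl, rfl⟩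
  · rintro ⟨h0, hv, hw, hd⟩
    rw [hmact]
    apply eq_of_blk_eq
    · rw [blk0_dgC_mul_mul_dgC, h0.eq, Units.mul_inv_cancel_right]
    · rw [blkv_dgC_mul_mul_dgC, hv]
    · rw [blkw_dgC_mul_mul_dgC, ← hw, vecMul_vecMul, Units.mul_inv, vecMul_one]
    · rw [blkd_dgC_mul_mul_dgC, hd]

theorem invS_mact (g : GL (Fin n) ℝ) (y : Matrix (Fin (n + 1)) (Fin (n + 1)) ℂ) :
    InvS (mact g y) = InvS y := by
  obtain ⟨h0, hv, hw, hd⟩ := (mact_eq_iff (y := y) g).1 rfl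
  simp only [InvS, charpoly_eq_of_semiconjBy h0, dotProduct_pow_mulVec_of_semiconjBy h0 hv hw, hd]

theorem rsSpanU_mact (hy : RSspanU y) (g : GL (Fin n) ℝ) : RSspanU (mact g y) :=
  have h := (mact_eq_iff (y := y) g).1 rfl
  IsCyclicVector.of_semiconjBy hy h.1 h.2.1

theorem isCyclicVector_transpose_of_rsSpan (hy : RSspan y) :
    IsCyclicVector (blk0 y)ᵀ (blkw y) := by
  simpa only [IsCyclicVector, ← transpose_pow, mulVec_transpose] using hy.2

theorem conj_apply_of_mem_sSet (hy : y ∈ sSet n) (i j : Fin (n + 1)) :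
    starRingEnd ℂ (y i j) = -y i j :=
  eq_neg_of_add_eq_zero_right (congrFun (congrFun hy i) j)

theorem exists_mact_eq_of_invS_eq (hy : y ∈ sSet n) (hz : z ∈ sSet n) (hrs : RSspan y)
    (hinv : InvS y = InvS z) : ∃ g : GL (Fin n) ℝ, mact g y = z := by
  obtain ⟨hchar, hmom, hd⟩ : (blk0 y).charpoly = (blk0 z).charpoly ∧ _ ∧ blkd y = blkd z := by
    simpa only [InvS, Prod.mk.injEq] using hinv
  obtain ⟨g, hg0, hgv, hgw⟩ := exists_semiconjBy_of_charpoly_eq hchar (congrFun hmom) hrs.1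
    (isCyclicVector_transpose_of_rsSpan hrs)
  have hreal : (g : Matrix (Fin n) (Fin n) ℂ).map (starRingEnd ℂ) = g :=
    IsCyclicVector.map_eq_self_of_semiconjBy hrs.1 hg0 hgv
      (Matrix.ext fun _ _ => conj_apply_of_mem_sSet hy _ _)
      (Matrix.ext fun _ _ => conj_apply_of_mem_sSet hz _ _)
      (funext fun _ => conj_apply_of_mem_sSet hy _ _)
      (funext fun _ => conj_apply_of_mem_sSet hz _ _)
  obtain ⟨g, rfl⟩ := exists_generalLinearGroup_map_ofReal_eq hreal
  exact ⟨g, (mact_eq_iff g).2 ⟨hg0, hgv, hgw, hd⟩⟩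

theorem invU_eq_invS_of_mem_uSet (hy : y ∈ uSet n) : InvU y = InvS y := by
  have hw : -star (blkv y) = blkw y :=
    funext fun j => neg_eq_iff_eq_neg.2 (congrFun (congrFun hy (Fin.last n)) j.castSucc)
  simp only [InvU, InvS, ← hw, neg_dotProduct]

end Blocks

section Arrow

variable {n : ℕ}

theorem iM_mem_sSet (A : Matrix (Fin (n + 1)) (Fin (n + 1)) ℝ) : iM A ∈ sSet n := by
  ext i j
  simp [iM]

theorem iM_mem_uSet {A : Matrix (Fin (n + 1)) (Fin (n + 1)) ℝ} (hA : A.IsSymm) :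
    iM A ∈ uSet n := by
  ext i j
  simp [iM, hA.apply i j]

theorem isSymm_arrow (lam mu : Fin n → ℝ) (d : ℝ) : (arrow lam mu d).IsSymm :=
  (IsSymm.fromBlocks (isSymm_diagonal lam) rfl (Matrix.ext fun _ _ => rfl)).reindex _

theorem blk0_iArrow (lam mu : Fin n → ℝ) (d : ℝ) :
    blk0 (iArrow lam mu d) = diagonal fun i => Complex.I * (lam i : ℂ) := by
  ext i j
  rcases eq_or_ne i j with rfl | hij
  · simp [blk0, iArrow, iM, arrow]
  · simp [blk0, iArrow, iM, arrow, hij]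

theorem blkv_iArrow (lam mu : Fin n → ℝ) (d : ℝ) :
    blkv (iArrow lam mu d) = fun i => Complex.I * (mu i : ℂ) := by
  ext i
  simp [blkv, iArrow, iM, arrow]

theorem blkw_iArrow (lam mu : Fin n → ℝ) (d : ℝ) :
    blkw (iArrow lam mu d) = fun i => Complex.I * (mu i : ℂ) := by
  ext i
  simp [blkw, iArrow, iM, arrow]

theorem blkd_iArrow (lam mu : Fin n → ℝ) (d : ℝ) :
    blkd (iArrow lam mu d) = Complex.I * d := by
  simp [blkd, iArrow, iM, arrow]

theorem exists_I_mul_eq_blkd_of_mem_uSet {x : Matrix (Fin (n + 1)) (Fin (n + 1)) ℂ}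
    (hx : x ∈ uSet n) : ∃ d : ℝ, Complex.I * d = blkd x := by
  have hconj : starRingEnd ℂ (blkd x) = -blkd x :=
    congrFun (congrFun hx (Fin.last n)) (Fin.last n)
  refine ⟨(blkd x).im, Complex.ext ?_ (by simp)⟩
  have hre := congrArg Complex.re hconj
  rw [Complex.conj_re, Complex.neg_re] at hre
  simp [self_eq_neg.1 hre]

theorem exists_invS_iArrow_eq_invU {x : Matrix (Fin (n + 1)) (Fin (n + 1)) ℂ} (hx : x ∈ uSet n) :
    ∃ (lam mu : Fin n → ℝ) (d : ℝ), InvS (iArrow lam mu d) = InvU x := by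
  have hx0 : (blk0 x)ᴴ = -blk0 x :=
    Matrix.ext fun i j => congrFun (congrFun hx i.castSucc) j.castSucc
  obtain ⟨lam, mu, hchar, hmom⟩ := exists_diagonal_charpoly_eq_and_dotProduct_eq hx0 (blkv x)
  obtain ⟨d, hd⟩ := exists_I_mul_eq_blkd_of_mem_uSet hx
  refine ⟨lam, mu, d, ?_⟩
  simp only [InvS, InvU, blk0_iArrow, blkv_iArrow, blkw_iArrow, blkd_iArrow, hchar, hmom, hd]

end Arrow

/-- a regular semi-simple `y ∈ s_{n+1}` matches to signature `(n,0)` iff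
it is `GL_n(ℝ)`-conjugate to an element `i·M` with `M` real symmetric arrow-shaped. -/
theorem stmt3 (n : ℕ) (y : Matrix (Fin (n+1)) (Fin (n+1)) ℂ)
    (hy : y ∈ sSet n) (hrs : RSspan y) :
    MatchesN0 y ↔
      ∃ (g : GL (Fin n) ℝ) (lam mu : Fin n → ℝ) (d : ℝ),
        mact g y = iArrow lam mu d := by
  constructor
  · rintro ⟨x, hx, -, hinv⟩
    obtain ⟨lam, mu, d, harrow⟩ := exists_invS_iArrow_eq_invU hx
    obtain ⟨g, hg⟩ := exists_mact_eq_of_invS_eq hy (iM_mem_sSet (arrow lam mu d)) hrs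
      (hinv.trans harrow.symm)
    exact ⟨g, lam, mu, d, hg⟩
  · rintro ⟨g, lam, mu, d, hg⟩
    have hu : mact g y ∈ uSet n := hg ▸ iM_mem_uSet (isSymm_arrow lam mu d)
    refine ⟨mact g y, hu, rsSpanU_mact hrs.1 g, ?_⟩
    rw [invU_eq_invS_of_mem_uSet hu, invS_mact]

end
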